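/- Let n ∈ ℕ and let Θ be an invertible skew-symmetric real n × n matrix (Θᵀ = −Θ). Define the bicharacter σ(η,ζ) := exp(2πi⟨η, Θζ⟩) on ℝⁿ, and for Schwartz functions f, g : ℝⁿ → ℂ define the twisted convolution (f ∗_σ g)(ξ) := ∫_{ℝⁿ} σ(η, ξ−η)·f(η)·g(ξ−η) dη, and the Fourier transform 𝓕h(v) := ∫_{ℝⁿ} h(ξ)·exp(2πi⟨ξ,v⟩) dξ. Then f ∗_σ g is integrable, the double integral on the right below converges absolutely, and for every v ∈ ℝⁿ: 𝓕(f ∗_σ g)(v) = ∫_{ℝⁿ} ∫_{ℝⁿ} exp(2πi⟨u,w⟩)·𝓕f(v − Θu)·𝓕g(v + w) du dw. -/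

import Mathlib

open MeasureTheory Matrix

/-- Twisted convolution on `ℝⁿ` with respect to the bicharacter
`σ(η,ζ) = exp(2πi⟨η,Θζ⟩)`. -/
noncomputable def twistedConvR {n : ℕ} (Θ : Matrix (Fin n) (Fin n) ℝ)
    (f g : (Fin n → ℝ) → ℂ) (ξ : Fin n → ℝ) : ℂ :=
  ∫ η : Fin n → ℝ,
    Complex.exp (2 * Real.pi * Complex.I * ((η ⬝ᵥ Θ.mulVec (ξ - η) : ℝ) : ℂ))
      * f η * g (ξ - η)

/-- The Fourier transform `𝓕h(v) = ∫ h(ξ) exp(2πi⟨ξ,v⟩) dξ`. -/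
noncomputable def fourierTr {n : ℕ} (h : (Fin n → ℝ) → ℂ) (v : Fin n → ℝ) : ℂ :=
  ∫ ξ : Fin n → ℝ, h ξ * Complex.exp (2 * Real.pi * Complex.I * ((ξ ⬝ᵥ v : ℝ) : ℂ))

/-! Unwinding `𝓕(f ∗_σ g)(v)` by Fubini's theorem and a translation gives the single integral
`∫ 𝓕f(v + Θζ) g(ζ) exp(2πi⟨ζ, v⟩) dζ`. On the Rieffel side, Fourier inversion evaluates the inner
integral over `w` to `𝓕f(v - Θu) g(-u) exp(-2πi⟨u, v⟩)`, and the two expressions are exchanged by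
the substitution `ζ = -u`. Joint integrability in `(u, w)` is the change of variables
`u ↦ v - Θu` in the integrable function `𝓕f`. -/

open scoped FourierTransform

section

variable {n : ℕ} {f g : (Fin n → ℝ) → ℂ}

lemma exp_two_pi_I_mul_eq_fourierChar (r : ℝ) :
    Complex.exp (2 * Real.pi * Complex.I * (r : ℂ)) = 𝐞 r := by
  rw [Real.fourierChar_apply]
  congr 1
  push_cast
  ring

lemma fourierChar_add (r s : ℝ) : (𝐞 (r + s) : ℂ) = 𝐞 r * 𝐞 s := by
  rw [AddChar.map_add_eq_mul, Circle.coe_mul]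

lemma integrable_fourierChar_mul {X : Type*} [MeasurableSpace X] {μ : Measure X} {φ : X → ℝ}
    {F : X → ℂ} (hφ : AEStronglyMeasurable φ μ) (hF : Integrable F μ) :
    Integrable (fun x => (𝐞 (φ x) : ℂ) * F x) μ := by
  have hchar : Continuous fun r : ℝ => (𝐞 r : ℂ) := by fun_prop
  exact hF.bdd_mul (hchar.comp_aestronglyMeasurable hφ)
    (.of_forall fun _ => (Circle.norm_coe _).le)

lemma integrable_comp_mulVec {ι E : Type*} [Fintype ι] [DecidableEq ι] [NormedAddCommGroup E]
    {A : Matrix ι ι ℝ} (hA : IsUnit A.det) {F : (ι → ℝ) → E} (hF : Integrable F) :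
    Integrable fun u => F (A *ᵥ u) := by
  refine Integrable.comp_measurable (f := toLin' A) ?_ (by fun_prop)
  rw [Real.map_matrix_volume_pi_eq_smul_volume_pi hA.ne_zero]
  exact hF.smul_measure ENNReal.ofReal_ne_top

lemma fourierTr_eq_integral_fourierChar (h : (Fin n → ℝ) → ℂ) (v : Fin n → ℝ) :
    fourierTr h v = ∫ ξ, h ξ * 𝐞 (ξ ⬝ᵥ v) := by
  simp only [fourierTr, exp_two_pi_I_mul_eq_fourierChar]

lemma fourierTr_eq_fourierInv (h : (Fin n → ℝ) → ℂ) (v : Fin n → ℝ) :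
    fourierTr h v =
      𝓕⁻ (fun x : EuclideanSpace ℝ (Fin n) => h x.ofLp) (WithLp.toLp 2 v) := by
  rw [fourierTr_eq_integral_fourierChar, Real.fourierInv_eq,
    ← (PiLp.volume_preserving_toLp (Fin n)).integral_comp
      (MeasurableEquiv.toLp 2 (Fin n → ℝ)).measurableEmbedding]
  congr 1 with ξ
  rw [EuclideanSpace.inner_toLp_toLp, star_trivial, dotProduct_comm, Circle.smul_def, smul_eq_mul,
    mul_comm]

lemma integrable_comp_ofLp_iff {E : Type*} [NormedAddCommGroup E] {F : (Fin n → ℝ) → E} :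
    Integrable (fun x : EuclideanSpace ℝ (Fin n) => F x.ofLp) ↔ Integrable F :=
  (PiLp.volume_preserving_ofLp (Fin n)).integrable_comp_emb
    (MeasurableEquiv.toLp 2 (Fin n → ℝ)).symm.measurableEmbedding

lemma fourierTr_fourierTr (hg : Integrable g) (hgc : Continuous g)
    (hg' : Integrable (fourierTr g)) (v : Fin n → ℝ) :
    fourierTr (fourierTr g) v = g (-v) := by
  let G : EuclideanSpace ℝ (Fin n) → ℂ := fun x => g x.ofLp
  have hG : Integrable G := integrable_comp_ofLp_iff.2 hg
  have hGinv : (fun x : EuclideanSpace ℝ (Fin n) => fourierTr g x.ofLp) = 𝓕⁻ G :=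
    funext fun x => fourierTr_eq_fourierInv g x.ofLp
  have hGfourier : Integrable (𝓕 G) := by
    have := (hGinv ▸ integrable_comp_ofLp_iff.2 hg').comp_neg
    simpa only [Real.fourierInv_eq_fourier_neg, neg_neg] using this
  rw [fourierTr_eq_fourierInv, hGinv, Real.fourierInv_eq_fourier_neg,
    Continuous.fourier_fourierInv_eq (by fun_prop) hG hGfourier]
  rfl

lemma integrable_fourierTr_schwartzMap (f : SchwartzMap (Fin n → ℝ) ℂ) :
    Integrable (fourierTr fun ξ => f ξ) := by
  let F : SchwartzMap (EuclideanSpace ℝ (Fin n)) ℂ :=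
    SchwartzMap.compCLMOfContinuousLinearEquiv ℂ (EuclideanSpace.equiv (Fin n) ℝ) f
  refine integrable_comp_ofLp_iff.1 ((𝓕⁻ F).integrable.congr (.of_forall fun x => ?_))
  rw [SchwartzMap.fourierInv_coe]
  exact (fourierTr_eq_fourierInv (fun ξ => f ξ) x.ofLp).symm

lemma twistedConvR_eq_integral_fourierChar (Θ : Matrix (Fin n) (Fin n) ℝ)
    (f g : (Fin n → ℝ) → ℂ) (ξ : Fin n → ℝ) :
    twistedConvR Θ f g ξ = ∫ ζ, 𝐞 ((ξ - ζ) ⬝ᵥ Θ *ᵥ ζ) * (g ζ * f (ξ - ζ)) := by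
  rw [twistedConvR, ← integral_sub_left_eq_self _ volume ξ]
  congr 1 with ζ
  rw [exp_two_pi_I_mul_eq_fourierChar, sub_sub_cancel]
  ring

lemma integrable_twistedConvR_integrand (Θ : Matrix (Fin n) (Fin n) ℝ)
    (hf : Integrable f) (hg : Integrable g) :
    Integrable (fun p : (Fin n → ℝ) × (Fin n → ℝ) =>
      (𝐞 ((p.1 - p.2) ⬝ᵥ Θ *ᵥ p.2) : ℂ) * (g p.2 * f (p.1 - p.2))) (volume.prod volume) :=
  integrable_fourierChar_mul (Continuous.aestronglyMeasurable (by fun_prop))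
    (hg.convolution_integrand (ContinuousLinearMap.mul ℝ ℂ) hf)

lemma integrable_twistedConvR (Θ : Matrix (Fin n) (Fin n) ℝ)
    (hf : Integrable f) (hg : Integrable g) : Integrable (twistedConvR Θ f g) := by
  rw [funext (twistedConvR_eq_integral_fourierChar Θ f g)]
  exact (integrable_twistedConvR_integrand Θ hf hg).integral_prod_left

lemma fourierTr_twistedConvR (Θ : Matrix (Fin n) (Fin n) ℝ)
    (hf : Integrable f) (hg : Integrable g) (v : Fin n → ℝ) :
    fourierTr (twistedConvR Θ f g) v =
      ∫ ζ, fourierTr f (v + Θ *ᵥ ζ) * (g ζ * 𝐞 (ζ ⬝ᵥ v)) := by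
  have hint : Integrable (fun p : (Fin n → ℝ) × (Fin n → ℝ) =>
      𝐞 ((p.1 - p.2) ⬝ᵥ Θ *ᵥ p.2) * (g p.2 * f (p.1 - p.2)) * (𝐞 (p.1 ⬝ᵥ v) : ℂ))
      (volume.prod volume) := by
    simpa only [mul_comm] using
      integrable_fourierChar_mul (φ := fun p : (Fin n → ℝ) × (Fin n → ℝ) => p.1 ⬝ᵥ v)
        (Continuous.aestronglyMeasurable (by fun_prop)) (integrable_twistedConvR_integrand Θ hf hg)
  have phase (η ζ : Fin n → ℝ) :
      (𝐞 (η ⬝ᵥ Θ *ᵥ ζ) * 𝐞 ((η + ζ) ⬝ᵥ v) : ℂ) = 𝐞 (η ⬝ᵥ (v + Θ *ᵥ ζ)) * 𝐞 (ζ ⬝ᵥ v) := by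
    rw [← fourierChar_add, ← fourierChar_add, add_dotProduct, dotProduct_add]
    ring_nf
  calc fourierTr (twistedConvR Θ f g) v
      = ∫ ξ, ∫ ζ, 𝐞 ((ξ - ζ) ⬝ᵥ Θ *ᵥ ζ) * (g ζ * f (ξ - ζ)) * 𝐞 (ξ ⬝ᵥ v) := by
        simp only [fourierTr_eq_integral_fourierChar, twistedConvR_eq_integral_fourierChar,
          integral_mul_const]
    _ = ∫ ζ, ∫ ξ, 𝐞 ((ξ - ζ) ⬝ᵥ Θ *ᵥ ζ) * (g ζ * f (ξ - ζ)) * 𝐞 (ξ ⬝ᵥ v) :=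
        integral_integral_swap hint
    _ = ∫ ζ, ∫ η, 𝐞 (η ⬝ᵥ Θ *ᵥ ζ) * (g ζ * f η) * 𝐞 ((η + ζ) ⬝ᵥ v) := by
        congr 1 with ζ
        rw [← integral_add_right_eq_self _ ζ]
        simp only [add_sub_cancel_right]
    _ = ∫ ζ, fourierTr f (v + Θ *ᵥ ζ) * (g ζ * 𝐞 (ζ ⬝ᵥ v)) := by
        congr 1 with ζ
        rw [fourierTr_eq_integral_fourierChar, ← integral_mul_const]
        congr 1 with η
        linear_combination (g ζ * f η) * phase η ζ

lemma integral_fourierChar_mul_fourierTr_add (hg : Integrable g) (hgc : Continuous g)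
    (hg' : Integrable (fourierTr g)) (u v : Fin n → ℝ) :
    ∫ w, 𝐞 (u ⬝ᵥ w) * fourierTr g (v + w) = g (-u) * 𝐞 (-u ⬝ᵥ v) := by
  have phase (w : Fin n → ℝ) : (𝐞 (u ⬝ᵥ w) : ℂ) = 𝐞 ((v + w) ⬝ᵥ u) * 𝐞 (-u ⬝ᵥ v) := by
    rw [← fourierChar_add, add_dotProduct, neg_dotProduct, dotProduct_comm v, dotProduct_comm w]
    ring_nf
  calc ∫ w, 𝐞 (u ⬝ᵥ w) * fourierTr g (v + w)
      = ∫ w, fourierTr g (v + w) * 𝐞 ((v + w) ⬝ᵥ u) * 𝐞 (-u ⬝ᵥ v) := by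
        congr 1 with w
        linear_combination fourierTr g (v + w) * phase w
    _ = fourierTr (fourierTr g) u * 𝐞 (-u ⬝ᵥ v) := by
        rw [integral_mul_const, fourierTr_eq_integral_fourierChar (fourierTr g),
          integral_add_left_eq_self fun w => fourierTr g w * (𝐞 (w ⬝ᵥ u) : ℂ)]
    _ = g (-u) * 𝐞 (-u ⬝ᵥ v) := by rw [fourierTr_fourierTr hg hgc hg']

lemma integrable_rieffel_integrand {Θ : Matrix (Fin n) (Fin n) ℝ} (hΘ : IsUnit Θ.det)
    {F G : (Fin n → ℝ) → ℂ} (hF : Integrable F) (hG : Integrable G) (v : Fin n → ℝ) :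
    Integrable fun p : (Fin n → ℝ) × (Fin n → ℝ) =>
      (𝐞 (p.1 ⬝ᵥ p.2) : ℂ) * F (v - Θ *ᵥ p.1) * G (v + p.2) := by
  have hprod := (integrable_comp_mulVec hΘ (hF.comp_sub_left v)).mul_prod (hG.comp_add_left v)
  rw [Measure.volume_eq_prod]
  simpa only [mul_assoc] using integrable_fourierChar_mul
    (φ := fun p : (Fin n → ℝ) × (Fin n → ℝ) => p.1 ⬝ᵥ p.2)
    (Continuous.aestronglyMeasurable (by fun_prop)) hprod

lemma fourierTr_twistedConvR_eq_rieffel (Θ : Matrix (Fin n) (Fin n) ℝ)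
    (hf : Integrable f) (hg : Integrable g) (hgc : Continuous g)
    (hg' : Integrable (fourierTr g)) (v : Fin n → ℝ) :
    fourierTr (twistedConvR Θ f g) v =
      ∫ u, ∫ w, 𝐞 (u ⬝ᵥ w) * fourierTr f (v - Θ *ᵥ u) * fourierTr g (v + w) := by
  rw [fourierTr_twistedConvR Θ hf hg, ← integral_neg_eq_self]
  congr 1 with u
  rw [mulVec_neg, ← sub_eq_add_neg, ← integral_fourierChar_mul_fourierTr_add hg hgc hg',
    ← integral_const_mul]
  congr 1 with w
  ring

theorem fourier_twistedConv_eq_rieffel_general (Θ : Matrix (Fin n) (Fin n) ℝ)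
    (hinv : IsUnit Θ.det) (hf : Integrable f) (hf' : Integrable (fourierTr f))
    (hg : Integrable g) (hgc : Continuous g) (hg' : Integrable (fourierTr g)) :
    Integrable (twistedConvR Θ f g) ∧
    ∀ v : Fin n → ℝ,
      Integrable (fun p : (Fin n → ℝ) × (Fin n → ℝ) =>
        Complex.exp (2 * Real.pi * Complex.I * ((p.1 ⬝ᵥ p.2 : ℝ) : ℂ))
          * fourierTr f (v - Θ *ᵥ p.1) * fourierTr g (v + p.2)) ∧
      fourierTr (twistedConvR Θ f g) v = ∫ u : Fin n → ℝ, ∫ w : Fin n → ℝ,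
        Complex.exp (2 * Real.pi * Complex.I * ((u ⬝ᵥ w : ℝ) : ℂ))
          * fourierTr f (v - Θ *ᵥ u) * fourierTr g (v + w) := by
  simp only [exp_two_pi_I_mul_eq_fourierChar]
  exact ⟨integrable_twistedConvR Θ hf hg, fun v => ⟨integrable_rieffel_integrand hinv hf' hg' v,
    fourierTr_twistedConvR_eq_rieffel Θ hf hg hgc hg' v⟩⟩

end

/-- The Fourier transform of the twisted convolution of Schwartz functions is the
Rieffel (Moyal-type) deformed product of their Fourier transforms. -/
theorem fourier_twistedConv_eq_rieffel {n : ℕ} (Θ : Matrix (Fin n) (Fin n) ℝ)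
    (hskew : Θᵀ = -Θ) (hinv : IsUnit Θ.det)
    (f g : SchwartzMap (Fin n → ℝ) ℂ) :
    Integrable (twistedConvR Θ (fun ξ => f ξ) (fun ξ => g ξ)) volume ∧
    ∀ v : Fin n → ℝ,
      Integrable (fun p : (Fin n → ℝ) × (Fin n → ℝ) =>
        Complex.exp (2 * Real.pi * Complex.I * ((p.1 ⬝ᵥ p.2 : ℝ) : ℂ))
          * fourierTr (fun ξ => f ξ) (v - Θ.mulVec p.1)
          * fourierTr (fun ξ => g ξ) (v + p.2)) volume ∧
      fourierTr (twistedConvR Θ (fun ξ => f ξ) (fun ξ => g ξ)) v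
        = ∫ u : Fin n → ℝ, ∫ w : Fin n → ℝ,
            Complex.exp (2 * Real.pi * Complex.I * ((u ⬝ᵥ w : ℝ) : ℂ))
              * fourierTr (fun ξ => f ξ) (v - Θ.mulVec u)
              * fourierTr (fun ξ => g ξ) (v + w) := by
  exact fourier_twistedConv_eq_rieffel_general Θ hinv f.integrable
    (integrable_fourierTr_schwartzMap f) g.integrable g.continuous
    (integrable_fourierTr_schwartzMap g)
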